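/- For every measurable F : (X × {−1,1})^m → [0,1] and every label distribution 𝒟' consistent with 𝒟: ∫ F d(𝒟')^{⊗m} − ∫ F d(𝒟 ⊗ U)^{⊗m} = (1/2) · Σ_{i=1}^m E_{(x,y)∼𝒟'}[y · h_i(x)]. -/

import Mathlib

/-! The sequence `a_k = hybridVal m D D' F k` interpolates between `∫ F d(D')^{⊗m}` (`k = 0`) and
`∫ F dP^{⊗m}` (`k = m`), where `P = D ⊗ U`, so the left-hand side is the telescoping sum of
`a_k - a_{k+1}`. Both `a_k` and `a_{k+1}` are obtained from one `hybridMeasure m D D' k` by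
resampling coordinate `k`, from `D'` and from `P` respectively (`map_update_prod_pi`,
`integral_pi_update`). With `G (x, b) = W_{k,b}(x)` this reads `a_k = ∫ G dD'` and `a_{k+1} = ∫ G dP`.
As `D` is the marginal of `D'`, the latter equals the `D'`-integral of
`(G (x, 1) + G (x, -1)) / 2`, and `G (x, y) - (G (x, 1) + G (x, -1)) / 2 = y * h_k(x) / 2` for
either value of the label `y`. -/

open MeasureTheory ProbabilityTheory

noncomputable section

/-- The ±1 real value of a Boolean label (`true` encodes the label 1, `false` the label −1). -/
def sgn (b : Bool) : ℝ := if b then 1 else -1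

/-- The uniform probability measure on the labels {−1, 1} (encoded as `Bool`). -/
def unifLabel : Measure Bool := (PMF.uniformOfFintype Bool).toMeasure

instance : IsProbabilityMeasure unifLabel :=
  PMF.toMeasure.isProbabilityMeasure _

/-- The hybrid product measure on `(X × {−1,1})^m` in which the coordinates of index `< i`
are drawn i.i.d. from `P = 𝒟 ⊗ U` and the remaining coordinates are drawn i.i.d. from `𝒟'`. -/
def hybridMeasure {X : Type*} [MeasurableSpace X] (m : ℕ) (D : Measure X)
    (D' : Measure (X × Bool)) (i : ℕ) : Measure (Fin m → X × Bool) :=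
  Measure.pi (fun j : Fin m => if (j : ℕ) < i then D.prod unifLabel else D')

/-- The hybrid value `a_i(F) = ∫ F d(P^{⊗i} ⊗ (𝒟')^{⊗(m−i)})`: the first `i` coordinates are
drawn i.i.d. from `P = 𝒟 ⊗ U` and the remaining `m − i` are drawn i.i.d. from `𝒟'`. -/
def hybridVal {X : Type*} [MeasurableSpace X] (m : ℕ) (D : Measure X)
    (D' : Measure (X × Bool)) (F : (Fin m → X × Bool) → ℝ) (i : ℕ) : ℝ :=
  ∫ z, F z ∂(hybridMeasure m D D' i)

/-- The hybrid function `W_{i,b}(x)`: run `F` with the `i`-th coordinate planted to `(x, b)`,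
the coordinates before `i` drawn i.i.d. from `P = 𝒟 ⊗ U` and the coordinates after `i` drawn
i.i.d. from `𝒟'`.  (The `i`-th coordinate of the integration variable is overwritten by
`Function.update`, so integrating it out over a probability measure has no effect.)
Here `i` is the 0-based index corresponding to the paper's 1-based index `i + 1`. -/
def hybridW {X : Type*} [MeasurableSpace X] (m : ℕ) (D : Measure X)
    (D' : Measure (X × Bool)) (F : (Fin m → X × Bool) → ℝ) (i : Fin m) (b : Bool)
    (x : X) : ℝ :=
  ∫ z, F (Function.update z i (x, b)) ∂(hybridMeasure m D D' i)

/-- The hybrid hypothesis `h_i(x) = W_{i,1}(x) − W_{i,−1}(x) ∈ [−1,1]`. -/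
def hybridHyp {X : Type*} [MeasurableSpace X] (m : ℕ) (D : Measure X)
    (D' : Measure (X × Bool)) (F : (Fin m → X × Bool) → ℝ) (i : Fin m) (x : X) : ℝ :=
  hybridW m D D' F i true x - hybridW m D D' F i false x

/-- Overwriting coordinate `i` of a sample from a product measure by an independent sample
from `ν` replaces the `i`-th factor of the product by `ν`. -/
lemma map_update_prod_pi {ι Z : Type*} [Fintype ι] [DecidableEq ι] [MeasurableSpace Z]
    (μ : ι → Measure Z) [∀ j, IsProbabilityMeasure (μ j)] (ν : Measure Z)
    [IsProbabilityMeasure ν] (i : ι) :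
    (ν.prod (Measure.pi μ)).map (fun p : Z × (ι → Z) => Function.update p.2 i p.1)
      = Measure.pi (Function.update μ i ν) := by
  have hprob : ∀ j, IsProbabilityMeasure (Function.update μ i ν j) := by
    intro j
    by_cases h : j = i
    · subst h; simpa
    · simpa [h] using inferInstanceAs (IsProbabilityMeasure (μ j))
  have hmeas : Measurable (fun p : Z × (ι → Z) => Function.update p.2 i p.1) := by
    fun_prop
  refine (Measure.pi_eq fun s hs => ?_).symm
  rw [Measure.map_apply hmeas (MeasurableSet.univ_pi hs)]
  have hpre : (fun p : Z × (ι → Z) => Function.update p.2 i p.1) ⁻¹' (Set.univ.pi s)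
      = s i ×ˢ Set.univ.pi (Function.update s i Set.univ) := by
    ext ⟨a, z⟩
    simp only [Set.mem_preimage, Set.mem_pi, Set.mem_univ, true_implies, Set.mem_prod]
    constructor
    · intro h
      refine ⟨by simpa using h i, fun j => ?_⟩
      by_cases hj : j = i
      · subst hj; simp
      · simpa [hj] using h j
    · rintro ⟨h1, h2⟩ j
      by_cases hj : j = i
      · subst hj; simpa using h1
      · simpa [hj] using h2 j
  rw [hpre, Measure.prod_prod, Measure.pi_pi,
    ← Finset.mul_prod_erase Finset.univ _ (Finset.mem_univ i),
    ← Finset.mul_prod_erase Finset.univ (fun j => Function.update μ i ν j (s j))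
      (Finset.mem_univ i)]
  simp only [Function.update_self, measure_univ, one_mul]
  congr 1
  refine Finset.prod_congr rfl fun j hj => ?_
  simp [Finset.ne_of_mem_erase hj]

lemma integrable_of_mem_Icc {Z : Type*} [MeasurableSpace Z] (μ : Measure Z) [IsFiniteMeasure μ]
    {f : Z → ℝ} (hf : Measurable f) (hb : ∀ z, f z ∈ Set.Icc (0 : ℝ) 1) : Integrable f μ :=
  Integrable.of_mem_Icc 0 1 hf.aemeasurable (Filter.Eventually.of_forall hb)

/-- Fubini for a product measure with its `i`-th factor singled out; the inner integral runs over
all coordinates, the `i`-th one being overwritten. -/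
lemma integral_pi_update {ι Z : Type*} [Fintype ι] [DecidableEq ι] [MeasurableSpace Z]
    (μ : ι → Measure Z) [∀ j, IsProbabilityMeasure (μ j)] (ν : Measure Z)
    [IsProbabilityMeasure ν] (i : ι) {F : (ι → Z) → ℝ} (hF : Measurable F)
    (hb : ∀ z, F z ∈ Set.Icc (0 : ℝ) 1) :
    ∫ z, F z ∂(Measure.pi (Function.update μ i ν))
      = ∫ a, ∫ z, F (Function.update z i a) ∂(Measure.pi μ) ∂ν := by
  have hmeas : Measurable (fun p : Z × (ι → Z) => Function.update p.2 i p.1) := by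
    fun_prop
  rw [← map_update_prod_pi, integral_map hmeas.aemeasurable hF.aestronglyMeasurable]
  exact integral_prod (fun p : Z × (ι → Z) => F (Function.update p.2 i p.1))
    (integrable_of_mem_Icc _ (hF.comp hmeas) fun p => hb _)

lemma integral_unifLabel (f : Bool → ℝ) :
    ∫ b, f b ∂unifLabel = (f true + f false) / 2 := by
  rw [unifLabel, PMF.integral_eq_sum]
  simp
  ring

/-- The one-coordinate step: as `D` is the marginal of `D'`, the difference of the integrals of `G` against `D'` and against
`D ⊗ U` is half the correlation of the label with `G (x, 1) - G (x, -1)`. -/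
lemma integral_sub_integral_prod_unifLabel {X : Type*} [MeasurableSpace X]
    (D : Measure X) [IsProbabilityMeasure D]
    (D' : Measure (X × Bool)) [IsProbabilityMeasure D'] (hD' : D'.map Prod.fst = D)
    {G : X × Bool → ℝ} (hG : Measurable G) (hb : ∀ p, G p ∈ Set.Icc (0 : ℝ) 1) :
    ∫ p, G p ∂D' - ∫ p, G p ∂(D.prod unifLabel)
      = (1 / 2) * ∫ p, sgn p.2 * (G (p.1, true) - G (p.1, false)) ∂D' := by
  have hGb : ∀ b, Measurable fun x => G (x, b) := fun b => by fun_prop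
  have hint : ∀ b, Integrable (fun p : X × Bool => G (p.1, b)) D' := fun b =>
    integrable_of_mem_Icc _ ((hGb b).comp measurable_fst) fun p => hb _
  have hP : ∫ p, G p ∂(D.prod unifLabel)
      = ∫ p : X × Bool, (G (p.1, true) + G (p.1, false)) / 2 ∂D' := by
    rw [integral_prod G (integrable_of_mem_Icc _ hG hb)]
    simp_rw [integral_unifLabel]
    rw [← hD', integral_map measurable_fst.aemeasurable]
    exact (((hGb true).add (hGb false)).div_const 2).aestronglyMeasurable
  have havg : Integrable (fun p : X × Bool => (G (p.1, true) + G (p.1, false)) / 2) D' :=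
    ((hint true).add (hint false)).div_const 2
  rw [hP, ← integral_sub (integrable_of_mem_Icc _ hG hb) havg, ← integral_const_mul]
  congr 1
  ext ⟨x, b⟩
  cases b <;> simp [sgn] <;> ring

instance isProbabilityMeasure_hybrid_factor {X : Type*} [MeasurableSpace X]
    (D : Measure X) [IsProbabilityMeasure D]
    (D' : Measure (X × Bool)) [IsProbabilityMeasure D'] (j k : ℕ) :
    IsProbabilityMeasure (if j < k then D.prod unifLabel else D') := by
  split_ifs <;> infer_instance

/-- Consecutive hybrids differ in the law of coordinate `i` only, so the one-coordinate step applies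
to `G (x, b) = W_{i,b}(x)`. -/
lemma hybridVal_sub_succ {X : Type*} [MeasurableSpace X]
    (D : Measure X) [IsProbabilityMeasure D]
    (D' : Measure (X × Bool)) [IsProbabilityMeasure D'] (hD' : D'.map Prod.fst = D)
    (m : ℕ) (F : (Fin m → X × Bool) → ℝ) (hF : Measurable F)
    (hb : ∀ z, F z ∈ Set.Icc (0 : ℝ) 1) (i : Fin m) :
    hybridVal m D D' F i - hybridVal m D D' F (i + 1)
      = (1 / 2) * ∫ z, sgn z.2 * hybridHyp m D D' F i z.1 ∂D' := by
  let μ : Fin m → Measure (X × Bool) := fun j => if (j : ℕ) < i then D.prod unifLabel else D'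
  have : ∀ j, IsProbabilityMeasure (μ j) := fun j =>
    isProbabilityMeasure_hybrid_factor D D' j i
  let G : X × Bool → ℝ := fun a => ∫ z, F (Function.update z i a) ∂(Measure.pi μ)
  have hmeas : Measurable fun p : (X × Bool) × (Fin m → X × Bool) =>
      F (Function.update p.2 i p.1) := hF.comp (by fun_prop)
  have hG : Measurable G := hmeas.stronglyMeasurable.integral_prod_right.measurable
  have hGb : ∀ a, G a ∈ Set.Icc (0 : ℝ) 1 := fun a => by
    refine ⟨integral_nonneg fun z => (hb _).1, ?_⟩
    have hle := integral_mono (μ := Measure.pi μ)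
      (integrable_of_mem_Icc _ (hmeas.comp measurable_prodMk_left) fun z => hb _)
      (integrable_const (1 : ℝ)) fun z => (hb (Function.update z i a)).2
    simpa using hle
  -- Coordinate `i` already has law `D'` under the `i`-th hybrid measure.
  have h0 : hybridVal m D D' F i = ∫ a, G a ∂D' := by
    have hμ : Function.update μ i D' = μ := Function.update_eq_self_iff.2 (by simp [μ])
    have h := integral_pi_update μ D' i hF hb
    rwa [hμ] at h
  have h1 : hybridVal m D D' F (i + 1) = ∫ a, G a ∂(D.prod unifLabel) := by
    have hμ : (fun j : Fin m => if (j : ℕ) < i + 1 then D.prod unifLabel else D')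
        = Function.update μ i (D.prod unifLabel) := by
      funext j
      by_cases hj : j = i
      · subst hj; simp
      · have hne : (j : ℕ) ≠ i := fun h => hj (Fin.ext h)
        have hlt : (j : ℕ) < i + 1 ↔ (j : ℕ) < i := by omega
        simp [hj, μ, hlt]
    rw [hybridVal, hybridMeasure, hμ]
    exact integral_pi_update μ _ i hF hb
  rw [h0, h1, integral_sub_integral_prod_unifLabel D D' hD' hG hGb]
  rfl

/-- the telescoping hybrid identity. For every measurable
`F : (X × {−1,1})^m → [0,1]` and every label distribution `𝒟'` consistent with `𝒟`:
`∫ F d(𝒟')^{⊗m} − ∫ F d(𝒟 ⊗ U)^{⊗m} = (1/2)·Σ_{i=1}^m E_{(x,y)∼𝒟'}[y·h_i(x)]`. -/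
theorem telescoping_hybrid_identity
    {X : Type*} [MeasurableSpace X]
    (D : Measure X) [IsProbabilityMeasure D]
    (D' : Measure (X × Bool)) [IsProbabilityMeasure D']
    (hD' : D'.map Prod.fst = D)
    (m : ℕ) (F : (Fin m → X × Bool) → ℝ) (hFmeas : Measurable F)
    (hFbd : ∀ z, F z ∈ Set.Icc (0 : ℝ) 1) :
    (∫ z, F z ∂(Measure.pi fun _ : Fin m => D'))
        - (∫ z, F z ∂(Measure.pi fun _ : Fin m => D.prod unifLabel))
      = (1 / 2) * ∑ i : Fin m, ∫ z, sgn z.2 * hybridHyp m D D' F i z.1 ∂D' := by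
  have h0 : ∫ z, F z ∂(Measure.pi fun _ : Fin m => D') = hybridVal m D D' F 0 := by
    simp [hybridVal, hybridMeasure]
  have hm : ∫ z, F z ∂(Measure.pi fun _ : Fin m => D.prod unifLabel)
      = hybridVal m D D' F m := by
    simp [hybridVal, hybridMeasure]
  rw [h0, hm, ← Finset.sum_range_sub', ← Fin.sum_univ_eq_sum_range
    (fun k => hybridVal m D D' F k - hybridVal m D D' F (k + 1)), Finset.mul_sum]
  exact Finset.sum_congr rfl fun i _ => hybridVal_sub_succ D D' hD' m F hFmeas hFbd i
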